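/- For any p, q ∈ P_n and any α ∈ (0,1) ∪ (1,∞), there exists a coupling M ∈ C(p,q) such that H_α(M) ≤ H_α(p ∧ q) + 1 ≤ min_{N ∈ C(p,q)} H_α(N) + 1, where H_α denotes the Rényi entropy of order α. -/

import Mathlib

/-!
**Upper bound.** Write `z = p ∧ q` and fix `f` with `f 0 = 0` and `f a + f b ≤ C * f (a + b)` for
`a, b ≥ 0`. A coupling `M` of `p` and `q` with `∑ f (M j k) ≤ C * ∑ f (z i)` is built by treating
the indices from the last to the first, so that `z i` is cut into at most two entries of `M`
(`exists_partial_coupling`). Once the indices `≥ i` are treated, the columns `≥ i` (say) are full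
and every row `j ≥ i` keeps one residual piece, to be placed later, as a whole, in one column
`< i`. Column `i - 1` is filled with whole residual pieces and a part of `p (i - 1)`, whose rest
becomes a new residual piece. This is possible (`exists_subset_sum_near`) because the pieces are at
most `p (i - 1)`, by monotonicity. If all the residual rows together with `p (i - 1)` do not fill
the column, then the column keeps a residual piece instead and rows and columns exchange roles.
The two functions `f = ± x ^ α` with `C = 2 ^ (1 - α)` give the term `+ 1` after taking logarithms.

**Lower bound.** The `k` largest entries of a coupling `N` lie in at most `k` rows and at most `k`
columns, so their sum is at most the minimum of the `k`-th prefix sums of `p` and `q`, which is the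
`k`-th prefix sum of `z`. Thus the vector of entries of `N` is majorized by `z`, and Karamata's
inequality (`karamata`: tangent lines and summation by parts) compares the power sums. For `α < 1`
the tangent of `x ^ α` at `0` is vertical, so the inequality is applied to `(x + ε) ^ α` and `ε`
tends to `0`.
-/

open Finset

/-- Sum of the first `i` components (0-indexed) of a vector; for `i ≥ n` this is the total
sum, which implements zero padding. -/
noncomputable def prefSum {n : ℕ} (p : Fin n → ℝ) (i : ℕ) : ℝ :=
  ∑ k : Fin n, if (k : ℕ) < i then p k else 0

/-- Membership in `P_n`: sorted non-increasingly, nonnegative components, summing to 1. -/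
def IsProbVec {n : ℕ} (p : Fin n → ℝ) : Prop :=
  (∀ i j : Fin n, i ≤ j → p j ≤ p i) ∧ (∀ i, 0 ≤ p i) ∧ (∑ i, p i) = 1

/-- Majorization `p ≼ q` (the shorter vector being padded with zeros). -/
def Maj {n m : ℕ} (p : Fin n → ℝ) (q : Fin m → ℝ) : Prop :=
  ∀ i : ℕ, prefSum p i ≤ prefSum q i
/-- The greatest lower bound `p ∧ q` in the majorization lattice `(P_n, ≼)`:
`z₁ = min (p₁, q₁)` and `zᵢ = min (∑_{j≤i} pⱼ, ∑_{j≤i} qⱼ) − ∑_{j<i} zⱼ`, i.e. its prefix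
sums are the minima of the corresponding prefix sums of `p` and `q`. -/
noncomputable def glbVec {n : ℕ} (p q : Fin n → ℝ) : Fin n → ℝ :=
  fun i => min (prefSum p ((i : ℕ) + 1)) (prefSum q ((i : ℕ) + 1)) -
    min (prefSum p (i : ℕ)) (prefSum q (i : ℕ))
/-- `M ∈ C(p,q)`: a coupling of `p` and `q`. -/
def IsCoupling {n m : ℕ} (M : Fin n → Fin m → ℝ) (p : Fin n → ℝ) (q : Fin m → ℝ) : Prop :=
  (∀ i j, 0 ≤ M i j) ∧ (∀ i, (∑ j, M i j) = p i) ∧ (∀ j, (∑ i, M i j) = q j)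

/-- Shannon entropy of the vector of entries of a matrix. -/
noncomputable def H2mat {n m : ℕ} (M : Fin n → Fin m → ℝ) : ℝ :=
  ∑ i, ∑ j, -(M i j * Real.logb 2 (M i j))
/-- Rényi entropy of order `α` (base-2 logarithm): `H_α(x) = (1/(1-α)) log₂ ∑ i, x i ^ α`. -/
noncomputable def Renyi (α : ℝ) {n : ℕ} (p : Fin n → ℝ) : ℝ :=
  (1 / (1 - α)) * Real.logb 2 (∑ i, p i ^ α)

/-- Rényi entropy of order `α` of the vector of entries of a matrix. -/
noncomputable def RenyiMat (α : ℝ) {n m : ℕ} (M : Fin n → Fin m → ℝ) : ℝ :=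
  (1 / (1 - α)) * Real.logb 2 (∑ i, ∑ j, M i j ^ α)

/-! ### Prefix sums and the greatest lower bound -/

lemma prefSum_zero {n : ℕ} (p : Fin n → ℝ) : prefSum p 0 = 0 := by simp [prefSum]

lemma prefSum_succ {n : ℕ} (p : Fin n → ℝ) (i : Fin n) :
    prefSum p ((i : ℕ) + 1) = prefSum p i + p i := by
  unfold prefSum
  have h : p i = ∑ k : Fin n, if k = i then p k else 0 := by simp
  rw [h, ← sum_add_distrib]
  refine sum_congr rfl fun k _ => ?_
  rcases lt_trichotomy (k : ℕ) i with h | h | h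
  · have : k ≠ i := fun e => by simp [e] at h
    simp [h, this, Nat.lt_succ_of_lt h]
  · have : k = i := Fin.ext h
    simp [this]
  · have h1 : k ≠ i := fun e => by simp [e] at h
    have h2 : ¬ (k : ℕ) < i := by omega
    have h3 : ¬ (k : ℕ) < (i : ℕ) + 1 := by omega
    simp [h1, h2, h3]

lemma prefSum_of_le {n : ℕ} (p : Fin n → ℝ) {i : ℕ} (h : n ≤ i) : prefSum p i = ∑ k, p k :=
  sum_congr rfl fun k _ => if_pos (lt_of_lt_of_le k.2 h)

lemma prefSum_glbVec {n : ℕ} (p q : Fin n → ℝ) (k : ℕ) :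
    prefSum (glbVec p q) k = min (prefSum p k) (prefSum q k) := by
  induction k with
  | zero => simp [prefSum_zero]
  | succ k ih =>
    by_cases hk : k < n
    · have h := prefSum_succ (glbVec p q) ⟨k, hk⟩
      simp only at h
      rw [h, ih]
      simp [glbVec]
    · have hk' : n ≤ k := not_lt.mp hk
      rw [prefSum_of_le _ hk', prefSum_of_le _ hk', prefSum_of_le _ hk'] at ih
      rw [prefSum_of_le _ (hk'.trans k.le_succ), prefSum_of_le _ (hk'.trans k.le_succ),
        prefSum_of_le _ (hk'.trans k.le_succ), ih]

lemma glbVec_comm {n : ℕ} (p q : Fin n → ℝ) : glbVec p q = glbVec q p := by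
  funext i
  simp [glbVec, min_comm]

lemma glbVec_nonneg {n : ℕ} {p q : Fin n → ℝ} (hp : ∀ i, 0 ≤ p i) (hq : ∀ i, 0 ≤ q i)
    (i : Fin n) : 0 ≤ glbVec p q i := by
  unfold glbVec
  rw [prefSum_succ, prefSum_succ, sub_nonneg]
  exact min_le_min (by linarith [hp i]) (by linarith [hq i])

lemma sum_glbVec {n : ℕ} {p q : Fin n → ℝ} (hp : IsProbVec p) (hq : IsProbVec q) :
    ∑ i, glbVec p q i = 1 := by
  rw [← prefSum_of_le (glbVec p q) le_rfl, prefSum_glbVec, prefSum_of_le _ le_rfl,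
    prefSum_of_le _ le_rfl, hp.2.2, hq.2.2, min_self]

/-! ### A coupling that cuts each component of the greatest lower bound in at most two -/

/-- Greedy choice: if every `a j` is at most `u`, then the subset sums of `a` come within `u`, from
below, of any target `t` between `0` and `∑ a + u`. -/
lemma exists_subset_sum_near {ι : Type*} [DecidableEq ι] (a : ι → ℝ) {u t : ℝ} (ht : 0 ≤ t)
    (s : Finset ι) : (∀ j ∈ s, a j ≤ u) → t ≤ ∑ j ∈ s, a j + u →
      ∃ S ⊆ s, ∑ j ∈ S, a j ≤ t ∧ t ≤ ∑ j ∈ S, a j + u := by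
  induction s using Finset.induction_on with
  | empty => exact fun _ h => ⟨∅, subset_rfl, by simpa using ht, h⟩
  | insert x s hx ih =>
    intro hu h
    by_cases h' : t ≤ ∑ j ∈ s, a j + u
    · obtain ⟨S, hS, h1, h2⟩ := ih (fun j hj => hu j (mem_insert_of_mem hj)) h'
      exact ⟨S, hS.trans (subset_insert _ _), h1, h2⟩
    · refine ⟨insert x s, subset_rfl, ?_, h⟩
      rw [sum_insert hx]
      linarith [hu x (mem_insert_self _ _)]

lemma IsCoupling.transpose {n : ℕ} {M : Fin n → Fin n → ℝ} {p q : Fin n → ℝ}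
    (h : IsCoupling M p q) : IsCoupling (fun i j => M j i) q p :=
  ⟨fun i j => h.1 j i, h.2.2, h.2.1⟩

/-- Adding `c` to column `i` of a coupling. If the supports are disjoint, then the sums of the
values of `f` add up. -/
lemma exists_coupling_add_col {n : ℕ} {f : ℝ → ℝ} (hf0 : f 0 = 0) {M : Fin n → Fin n → ℝ}
    {a' b' a b c : Fin n → ℝ} (hM : IsCoupling M a' b') (i : Fin n) (hc : ∀ j, 0 ≤ c j)
    (hdisj : ∀ j, M j i = 0 ∨ c j = 0) (ha : ∀ j, a j = a' j + c j)
    (hb : ∀ k, b k = b' k + if k = i then ∑ j, c j else 0) :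
    ∃ M' : Fin n → Fin n → ℝ, IsCoupling M' a b ∧
      ∑ j, ∑ k, f (M' j k) = ∑ j, ∑ k, f (M j k) + ∑ j, f (c j) := by
  refine ⟨fun j k => M j k + if k = i then c j else 0, ⟨fun j k => ?_, fun j => ?_, fun k => ?_⟩, ?_⟩
  · have := hM.1 j k
    have := hc j
    dsimp only
    split_ifs <;> linarith
  · rw [sum_add_distrib, hM.2.1, ha]
    simp
  · rw [sum_add_distrib, hM.2.2, hb]
    split_ifs <;> simp
  · rw [← sum_add_distrib]
    refine sum_congr rfl fun j _ => ?_
    have : f (c j) = ∑ k : Fin n, if k = i then f (c j) else 0 := by simp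
    rw [this, ← sum_add_distrib]
    refine sum_congr rfl fun k _ => ?_
    by_cases hk : k = i
    · subst hk
      rcases hdisj j with h | h <;> simp [h, hf0]
    · simp [hk]

/-- Splitting a sum over `Fin n` at the index `i`. -/
lemma sum_split_at {n : ℕ} (i : Fin n) (a : Fin n → ℝ) :
    ∑ j, a j = prefSum a i + a i + ∑ j ∈ univ.filter (i < ·), a j := by
  rw [← prefSum_succ, prefSum, sum_filter, ← sum_add_distrib]
  refine sum_congr rfl fun j _ => ?_
  by_cases h : i < j
  · have : ¬ (j : ℕ) < (i : ℕ) + 1 := by have := Fin.lt_def.mp h; omega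
    simp [h, this]
  · have : (j : ℕ) < (i : ℕ) + 1 := by have := fun h' => h (Fin.lt_def.mpr h'); omega
    simp [h, this]

lemma prefSum_congr {n : ℕ} {a p : Fin n → ℝ} {i : ℕ} (h : ∀ j : Fin n, (j : ℕ) < i → a j = p j) :
    prefSum a i = prefSum p i :=
  sum_congr rfl fun j _ => by split_ifs with hj <;> simp [h j, hj]

/-- The state when the indices `≥ i` have been treated: `a` and `b` are the masses still to be
placed in the rows and columns. They are those of `p` and `q` below `i`, the columns `≥ i` are full
and the rows `≥ i` hold residual pieces, each at most `p k` for all `k < i`. The residual pieces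
contribute to the bound uncut. -/
lemma exists_partial_coupling {n : ℕ} {f : ℝ → ℝ} {C : ℝ} (hf0 : f 0 = 0)
    (hf : ∀ x y, 0 ≤ x → 0 ≤ y → f x + f y ≤ C * f (x + y)) (i : ℕ) : i ≤ n →
    ∀ p q a b : Fin n → ℝ, (∀ j k, j ≤ k → p k ≤ p j) → (∀ j k, j ≤ k → q k ≤ q j) →
      (∀ j, 0 ≤ a j) → (∀ j, 0 ≤ b j) →
      (∀ j : Fin n, (j : ℕ) < i → a j = p j) → (∀ j : Fin n, (j : ℕ) < i → b j = q j) →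
      (∀ j : Fin n, i ≤ (j : ℕ) → b j = 0) →
      (∀ j k : Fin n, i ≤ (j : ℕ) → (k : ℕ) < i → a j ≤ p k) →
      ∑ j, a j = ∑ j, b j →
      ∃ M : Fin n → Fin n → ℝ, IsCoupling M a b ∧ ∑ j, ∑ k, f (M j k) ≤
        ∑ j : Fin n, if (j : ℕ) < i then C * f (glbVec p q j) else f (a j) := by
  induction i with
  | zero =>
    intro _ p q a b _ _ ha _ _ _ hb0 _ hab
    have hb : b = 0 := funext fun j => hb0 j (Nat.zero_le _)
    have ha' : ∀ j, a j = 0 := by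
      subst hb
      have : ∑ j, a j = 0 := by simpa using hab
      exact fun j => (sum_eq_zero_iff_of_nonneg fun j _ => ha j).mp this j (mem_univ j)
    exact ⟨0, ⟨by simp, by simp [ha'], by simp [hb]⟩, by simp [hf0, ha']⟩
  | succ m ih =>
    intro hm p q a b hp hq ha hb hap hbq hb0 hap' hab
    obtain ⟨i, rfl⟩ : ∃ i : Fin n, (i : ℕ) = m := ⟨⟨m, hm⟩, rfl⟩
    have hai : a i = p i := hap i (Nat.lt_succ_self _)
    have hbi : b i = q i := hbq i (Nat.lt_succ_self _)
    have hPi : prefSum a i = prefSum p i := prefSum_congr fun j hj => hap j (by omega)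
    have hQi : prefSum b i = prefSum q i := prefSum_congr fun j hj => hbq j (by omega)
    set T : Finset (Fin n) := univ.filter (i < ·) with hT
    have hmT : ∀ j, j ∈ T ↔ (i : ℕ) < j := fun j => by simp [hT]
    have hbT : ∑ j ∈ T, b j = 0 := sum_eq_zero fun j hj => hb0 j ((hmT j).mp hj)
    have hRnn : 0 ≤ ∑ j ∈ T, a j := sum_nonneg fun j _ => ha j
    have hbal : prefSum p i + p i + ∑ j ∈ T, a j = prefSum q i + q i := by
      have h1 := sum_split_at i a
      have h2 := sum_split_at i b
      rw [← hT, hai, hPi] at h1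
      rw [← hT, hbi, hQi, hbT] at h2
      linarith
    have hqi : 0 ≤ q i := hbi ▸ hb i
    have hpi : 0 ≤ p i := hai ▸ ha i
    have hz : glbVec p q i = prefSum p i + p i - min (prefSum p i) (prefSum q i) := by
      rw [glbVec, prefSum_succ, prefSum_succ, min_eq_left (by linarith)]
    by_cases hcase : q i ≤ ∑ j ∈ T, a j + p i
    · -- The residual pieces and `p i` suffice to fill column `i`; here `z i = p i`.
      have hzi : glbVec p q i = p i := by
        rw [hz, min_eq_left (by linarith)]; ring
      obtain ⟨S, hST, hS1, hS2⟩ := exists_subset_sum_near a hqi T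
        (fun j hj => hap' j i ((hmT j).mp hj) (Nat.lt_succ_self _)) hcase
      have hiS : i ∉ S := fun h => lt_irrefl _ ((hmT i).mp (hST h))
      -- `c` is the new content of column `i`.
      set c : Fin n → ℝ := fun j => if j = i then q i - ∑ j ∈ S, a j else if j ∈ S then a j else 0
        with hc
      have hci : c i = q i - ∑ j ∈ S, a j := by simp [hc]
      have hcS : ∀ j ∈ S, c j = a j := fun j hj => by
        have : j ≠ i := fun h => hiS (h ▸ hj)
        simp [hc, this, hj]
      have hcS' : ∀ j, j ≠ i → j ∉ S → c j = 0 := fun j h1 h2 => by simp [hc, h1, h2]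
      have hcle : ∀ j, c j ≤ a j := fun j => by
        by_cases h1 : j = i
        · subst h1; rw [hci, hai]; linarith
        · by_cases h2 : j ∈ S
          · rw [hcS j h2]
          · rw [hcS' j h1 h2]; exact ha j
      have hcnn : ∀ j, 0 ≤ c j := fun j => by
        by_cases h1 : j = i
        · subst h1; rw [hci]; linarith
        · by_cases h2 : j ∈ S
          · rw [hcS j h2]; exact ha j
          · rw [hcS' j h1 h2]
      have hclt : ∀ j : Fin n, (j : ℕ) < i → c j = 0 := fun j hj => by
        refine hcS' j (fun h => by simp [h] at hj) fun h => ?_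
        have := (hmT j).mp (hST h)
        omega
      have hcsum : ∑ j, c j = q i := by
        have h1 : ∑ j, c j = ∑ j ∈ insert i S, c j := by
          refine (sum_subset (subset_univ _) fun j _ hj => ?_).symm
          rw [mem_insert, not_or] at hj
          exact hcS' j hj.1 hj.2
        rw [h1, sum_insert hiS, hci, sum_congr rfl hcS]
        ring
      set b' : Fin n → ℝ := fun k => if k = i then 0 else b k with hb'
      have hbb' : ∀ k, b k = b' k + if k = i then ∑ j, c j else 0 := fun k => by
        by_cases h : k = i
        · subst h; simp [hb', hcsum, hbi]
        · simp [hb', h]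
      obtain ⟨M, hM, hMf⟩ := ih (by omega) p q (fun j => a j - c j) b' hp hq
        (fun j => sub_nonneg.mpr (hcle j))
        (fun k => by simp only [hb']; split_ifs; exacts [le_rfl, hb k])
        (fun j hj => by simp [hclt j hj, hap j (by omega)])
        (fun j hj => by
          have : j ≠ i := fun h => by simp [h] at hj
          simp [hb', this, hbq j (by omega)])
        (fun j hj => by
          by_cases h : j = i
          · simp [hb', h]
          · have : (j : ℕ) ≠ i := fun h' => h (Fin.ext h')
            simp [hb', h, hb0 j (by omega)])
        (fun j k hj hk => by
          have h0 := hcnn j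
          by_cases h : j = i
          · have := hp k i (Fin.le_def.mpr hk.le)
            subst h
            simp only [hai]
            linarith
          · have : (j : ℕ) ≠ i := fun h' => h (Fin.ext h')
            have := hap' j k (by omega) (by omega)
            linarith)
        (by
          have h1 : ∑ k, b k = ∑ k, b' k + ∑ j, c j := by
            rw [sum_congr rfl fun k _ => hbb' k, sum_add_distrib]; simp
          rw [sum_sub_distrib]; linarith)
      have hMi : ∀ j, M j i = 0 := fun j => by
        have h1 : ∑ j, M j i = 0 := by rw [hM.2.2 i]; simp [hb']
        exact (sum_eq_zero_iff_of_nonneg fun j _ => hM.1 j i).mp h1 j (mem_univ j)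
      obtain ⟨M', hM', hM'f⟩ := exists_coupling_add_col hf0 hM i hcnn (fun j => Or.inl (hMi j))
        (a := a) (b := b) (fun j => by ring) hbb'
      refine ⟨M', hM', ?_⟩
      rw [hM'f]
      refine (add_le_add_left hMf _).trans ?_
      rw [← sum_add_distrib]
      refine sum_le_sum fun j _ => ?_
      rcases lt_trichotomy (j : ℕ) i with h | h | h
      · simp [h, Nat.lt_succ_of_lt h, hclt j h, hf0]
      · obtain rfl : j = i := Fin.ext h
        have := hf (a j - c j) (c j) (sub_nonneg.mpr (hcle j)) (hcnn j)
        rw [sub_add_cancel, hai] at this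
        simpa [hzi, hai] using this
      · have h1 : ¬ (j : ℕ) < i := by omega
        have h2 : ¬ (j : ℕ) < (i : ℕ) + 1 := by omega
        have h3 : j ≠ i := fun e => by simp [e] at h
        rw [if_neg h1, if_neg h2]
        by_cases h4 : j ∈ S
        · simp [hcS j h4, hf0]
        · simp [hcS' j h3 h4, hf0]
    · -- Column `i` takes everything in the rows `≥ i` and keeps a residual piece itself.
      push Not at hcase
      have hzi : glbVec p q i = q i - ∑ j ∈ T, a j := by
        rw [hz, min_eq_right (by linarith)]; linarith
      set c : Fin n → ℝ := fun j => if (i : ℕ) ≤ j then a j else 0 with hc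
      have hcge : ∀ j : Fin n, (i : ℕ) ≤ j → c j = a j := fun j hj => if_pos hj
      have hclt : ∀ j : Fin n, (j : ℕ) < i → c j = 0 := fun j hj => if_neg (not_le.mpr hj)
      have hcnn : ∀ j, 0 ≤ c j := fun j => by
        simp only [hc]; split_ifs; exacts [ha j, le_rfl]
      have hcsum : ∑ j, c j = p i + ∑ j ∈ T, a j := by
        rw [sum_split_at i c, ← hT]
        have h1 : prefSum c i = 0 := sum_eq_zero fun j _ => by
          by_cases h : (j : ℕ) < i
          · simp [hclt j h]
          · simp [h]
        have h2 : c i = p i := (hcge i le_rfl).trans hai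
        have h3 : ∑ j ∈ T, c j = ∑ j ∈ T, a j := sum_congr rfl fun j hj =>
          hcge j ((hmT j).mp hj).le
        rw [h1, h2, h3, zero_add]
      set b' : Fin n → ℝ := fun k => if k = i then q i - ∑ j, c j else b k with hb'
      have hbb' : ∀ k, b k = b' k + if k = i then ∑ j, c j else 0 := fun k => by
        by_cases h : k = i
        · subst h; simp [hb', hbi]
        · simp [hb', h]
      have hb'i : b' i = q i - (p i + ∑ j ∈ T, a j) := by simp [hb', hcsum]
      have hb'nn : ∀ k, 0 ≤ b' k := fun k => by
        by_cases h : k = i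
        · subst h; rw [hb'i]; linarith
        · simp [hb', h, hb k]
      have hb'gt : ∀ k : Fin n, (i : ℕ) < k → b' k = 0 := fun k hk => by
        have : k ≠ i := fun e => by simp [e] at hk
        simp [hb', this, hb0 k hk]
      obtain ⟨M, hM, hMf⟩ := ih (by omega) q p b' (fun j => a j - c j) hq hp hb'nn
        (fun j => by simp only [hc]; split_ifs <;> simp [ha j])
        (fun j hj => by
          have : j ≠ i := fun h => by simp [h] at hj
          simp [hb', this, hbq j (by omega)])
        (fun j hj => by simp [hclt j hj, hap j (by omega)])
        (fun j hj => by simp [hcge j hj])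
        (fun j k hj hk => by
          have hki := hq k i (Fin.le_def.mpr hk.le)
          by_cases h : j = i
          · subst h; rw [hb'i]; linarith
          · have : (j : ℕ) ≠ i := fun h' => h (Fin.ext h')
            rw [hb'gt j (by omega)]
            linarith)
        (by
          have h1 : ∑ k, b k = ∑ k, b' k + ∑ j, c j := by
            rw [sum_congr rfl fun k _ => hbb' k, sum_add_distrib]; simp
          rw [sum_sub_distrib]; linarith)
      have hdisj : ∀ j, M i j = 0 ∨ c j = 0 := fun j => by
        by_cases h : (i : ℕ) ≤ j
        · left
          have h1 : ∑ k, M k j = 0 := by rw [hM.2.2 j]; simp [hcge j h]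
          exact (sum_eq_zero_iff_of_nonneg fun k _ => hM.1 k j).mp h1 i (mem_univ i)
        · right; exact hclt j (not_le.mp h)
      obtain ⟨M', hM', hM'f⟩ := exists_coupling_add_col hf0 hM.transpose i hcnn hdisj
        (a := a) (b := b) (fun j => by ring) hbb'
      refine ⟨M', hM', ?_⟩
      rw [hM'f, sum_comm]
      refine (add_le_add_left hMf _).trans ?_
      rw [← sum_add_distrib]
      refine sum_le_sum fun j _ => ?_
      rcases lt_trichotomy (j : ℕ) i with h | h | h
      · simp [h, Nat.lt_succ_of_lt h, hclt j h, hf0, glbVec_comm q p]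
      · obtain rfl : j = i := Fin.ext h
        have := hf (b' j) (p j) (hb'nn j) hpi
        have h2 : b' j + p j = glbVec p q j := by rw [hb'i, hzi]; ring
        rw [h2] at this
        simpa [hcge j le_rfl, hai] using this
      · have h1 : ¬ (j : ℕ) < i := by omega
        have h2 : ¬ (j : ℕ) < (i : ℕ) + 1 := by omega
        rw [if_neg h1, if_neg h2, hb'gt j h, hf0]
        simp [hcge j h.le]

lemma exists_coupling_sum_le {n : ℕ} {f : ℝ → ℝ} {C : ℝ} (hf0 : f 0 = 0)
    (hf : ∀ x y, 0 ≤ x → 0 ≤ y → f x + f y ≤ C * f (x + y)) {p q : Fin n → ℝ}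
    (hp : IsProbVec p) (hq : IsProbVec q) :
    ∃ M : Fin n → Fin n → ℝ, IsCoupling M p q ∧
      ∑ j, ∑ k, f (M j k) ≤ C * ∑ j, f (glbVec p q j) := by
  obtain ⟨M, hM, h⟩ := exists_partial_coupling hf0 hf n le_rfl p q p q hp.1 hq.1 hp.2.1 hq.2.1
    (fun _ _ => rfl) (fun _ _ => rfl) (fun j hj => absurd j.2 (not_lt.mpr hj))
    (fun j _ hj => absurd j.2 (not_lt.mpr hj)) (by rw [hp.2.2, hq.2.2])
  refine ⟨M, hM, h.trans_eq ?_⟩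
  rw [mul_sum]
  exact sum_congr rfl fun j _ => if_pos j.2

/-! ### Every coupling is majorized by the greatest lower bound -/

/-- Karamata's inequality for a function `f` with a monotone slope `c` of supporting lines. -/
lemma karamata {f c : ℝ → ℝ} (hfc : ∀ x y, 0 ≤ x → 0 ≤ y → f x + c x * (y - x) ≤ f y)
    (hc : ∀ x y, 0 ≤ x → x ≤ y → c x ≤ c y) {m : ℕ} {x y : ℕ → ℝ} (hx : ∀ i, 0 ≤ x i)
    (hy : ∀ i, 0 ≤ y i) (hanti : ∀ i, i + 1 < m → x (i + 1) ≤ x i)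
    (hmaj : ∀ k, ∑ i ∈ range k, x i ≤ ∑ i ∈ range k, y i)
    (htot : ∑ i ∈ range m, x i = ∑ i ∈ range m, y i) :
    ∑ i ∈ range m, f (x i) ≤ ∑ i ∈ range m, f (y i) := by
  -- Summation by parts, one term at a time.
  have key : ∀ k, k < m → c (x k) * (∑ i ∈ range (k + 1), (y i - x i)) ≤
      ∑ i ∈ range (k + 1), c (x i) * (y i - x i) := by
    intro k
    induction k with
    | zero => simp
    | succ k ih =>
      intro hk
      have h1 := ih (by omega)
      rw [sum_range_succ, sum_range_succ _ (k + 1), mul_add]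
      have hD : 0 ≤ ∑ i ∈ range (k + 1), (y i - x i) := by
        rw [sum_sub_distrib]; linarith [hmaj (k + 1)]
      have h2 := mul_le_mul_of_nonneg_right (hc _ _ (hx (k + 1)) (hanti k hk)) hD
      linarith
  have h0 : 0 ≤ ∑ i ∈ range m, c (x i) * (y i - x i) := by
    cases m with
    | zero => simp
    | succ k =>
      have := key k (Nat.lt_succ_self _)
      rw [sum_sub_distrib, htot, sub_self, mul_zero] at this
      exact this
  have h1 : ∑ i ∈ range m, (f (x i) + c (x i) * (y i - x i)) ≤ ∑ i ∈ range m, f (y i) :=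
    sum_le_sum fun i _ => hfc _ _ (hx i) (hy i)
  rw [sum_add_distrib] at h1
  linarith

lemma sum_le_prefSum {n : ℕ} {p : Fin n → ℝ} (hp : IsProbVec p) (I : Finset (Fin n)) {k : ℕ}
    (hI : I.card ≤ k) : ∑ i ∈ I, p i ≤ prefSum p k := by
  by_cases hk : k < n
  · -- Compare both sides with the threshold `t = p k`.
    set t := p ⟨k, hk⟩ with ht
    have h1 : ∑ i ∈ I, (p i - t) ≤ ∑ i : Fin n, if (i : ℕ) < k then p i - t else 0 := by
      rw [← sum_filter]
      rw [← sum_filter_add_sum_filter_not I (fun i : Fin n => (i : ℕ) < k)]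
      have h2 : ∑ i ∈ I.filter (fun i : Fin n => ¬ (i : ℕ) < k), (p i - t) ≤ 0 := sum_nonpos fun i hi => by
        have := hp.1 ⟨k, hk⟩ i (Fin.le_def.mpr (not_lt.mp (mem_filter.mp hi).2))
        linarith
      have h3 : ∑ i ∈ I.filter (fun i : Fin n => (i : ℕ) < k), (p i - t) ≤
          ∑ i ∈ univ.filter (fun i : Fin n => (i : ℕ) < k), (p i - t) :=
        sum_le_sum_of_subset_of_nonneg (filter_subset_filter _ (subset_univ _)) fun i hi _ => by
          have := hp.1 i ⟨k, hk⟩ (Fin.le_def.mpr (mem_filter.mp hi).2.le)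
          linarith
      linarith
    have h4 : (∑ i : Fin n, if (i : ℕ) < k then p i - t else 0) = prefSum p k - k * t := by
      have h5 : (∑ i : Fin n, if (i : ℕ) < k then t else 0) = k * t := by
        rw [← sum_filter, sum_const, nsmul_eq_mul]
        congr 2
        rw [Fin.card_filter_val_lt]
        omega
      rw [prefSum, ← h5, ← sum_sub_distrib]
      exact sum_congr rfl fun i _ => by split_ifs <;> simp
    rw [sum_sub_distrib, sum_const, nsmul_eq_mul, h4] at h1
    have h6 : (I.card : ℝ) * t ≤ k * t :=
      mul_le_mul_of_nonneg_right (by exact_mod_cast hI) (hp.2.1 _)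
    linarith
  · rw [prefSum_of_le p (not_lt.mp hk)]
    exact sum_le_sum_of_subset_of_nonneg (subset_univ _) fun i _ _ => hp.2.1 i

/-- Any `k` entries of a coupling lie in at most `k` rows. -/
lemma IsCoupling.sum_le_prefSum {n : ℕ} {N : Fin n → Fin n → ℝ} {p q : Fin n → ℝ}
    (hp : IsProbVec p) (hN : IsCoupling N p q) (S : Finset (Fin n × Fin n)) {k : ℕ}
    (hS : S.card ≤ k) : ∑ s ∈ S, N s.1 s.2 ≤ prefSum p k := by
  refine le_trans ?_ (_root_.sum_le_prefSum hp (S.image Prod.fst) (card_image_le.trans hS))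
  calc ∑ s ∈ S, N s.1 s.2 ≤ ∑ s ∈ S.image Prod.fst ×ˢ univ, N s.1 s.2 := by
        refine sum_le_sum_of_subset_of_nonneg (fun s hs => ?_) fun s _ _ => hN.1 _ _
        exact mem_product.mpr ⟨mem_image_of_mem _ hs, mem_univ _⟩
    _ = ∑ i ∈ S.image Prod.fst, p i := by
        rw [sum_product]
        exact sum_congr rfl fun i _ => hN.2.1 i

lemma IsCoupling.sum_le_prefSum_glbVec {n : ℕ} {N : Fin n → Fin n → ℝ} {p q : Fin n → ℝ}
    (hp : IsProbVec p) (hq : IsProbVec q) (hN : IsCoupling N p q) (S : Finset (Fin n × Fin n))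
    {k : ℕ} (hS : S.card ≤ k) : ∑ s ∈ S, N s.1 s.2 ≤ prefSum (glbVec p q) k := by
  rw [prefSum_glbVec]
  refine le_min (hN.sum_le_prefSum hp S hS) ?_
  have h := hN.transpose.sum_le_prefSum hq (S.map (Equiv.prodComm _ _).toEmbedding)
    ((card_map _).trans_le hS)
  simpa using h

/-- The values of a function on a finite type can be listed in non-increasing order. -/
lemma exists_antitone_enum {ι : Type*} [Fintype ι] {m : ℕ} (hm : Fintype.card ι = m) (g : ι → ℝ) :
    ∃ e : Fin m ≃ ι, Antitone (g ∘ e) := by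
  let e₀ := (Fintype.equivFinOfCardEq hm).symm
  refine ⟨(Tuple.sort fun i => - g (e₀ i)).trans e₀, fun i j hij => ?_⟩
  have := Tuple.monotone_sort (fun i => - g (e₀ i)) hij
  simpa using this

/-- Extension of a finite vector by zeros. -/
noncomputable def zeroPad {m : ℕ} (x : Fin m → ℝ) (i : ℕ) : ℝ := if h : i < m then x ⟨i, h⟩ else 0

lemma zeroPad_nonneg {m : ℕ} {x : Fin m → ℝ} (hx : ∀ i, 0 ≤ x i) (i : ℕ) : 0 ≤ zeroPad x i := by
  unfold zeroPad
  split_ifs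
  exacts [hx _, le_rfl]

lemma sum_range_zeroPad {m : ℕ} (x : Fin m → ℝ) (k : ℕ) :
    ∑ i ∈ range k, zeroPad x i = prefSum x k := by
  induction k with
  | zero => simp [prefSum_zero]
  | succ k ih =>
    rw [sum_range_succ, ih]
    by_cases hk : k < m
    · simpa [zeroPad, hk] using (prefSum_succ x ⟨k, hk⟩).symm
    · rw [prefSum_of_le x (not_lt.mp hk), prefSum_of_le x ((not_lt.mp hk).trans k.le_succ)]
      simp [zeroPad, hk]

/-- Karamata's inequality for the entries of a coupling and `p ∧ q` padded with zeros. -/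
lemma IsCoupling.sum_le_sum_zeroPad {f c : ℝ → ℝ}
    (hfc : ∀ x y, 0 ≤ x → 0 ≤ y → f x + c x * (y - x) ≤ f y)
    (hc : ∀ x y, 0 ≤ x → x ≤ y → c x ≤ c y) {n : ℕ} {N : Fin n → Fin n → ℝ} {p q : Fin n → ℝ}
    (hp : IsProbVec p) (hq : IsProbVec q) (hN : IsCoupling N p q) :
    ∑ i, ∑ j, f (N i j) ≤ ∑ i ∈ range (n * n), f (zeroPad (glbVec p q) i) := by
  obtain ⟨e, he⟩ := exists_antitone_enum (m := n * n) (by simp) fun s : Fin n × Fin n => N s.1 s.2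
  set x : Fin (n * n) → ℝ := fun i => N (e i).1 (e i).2 with hx
  have hxnn : ∀ i, 0 ≤ x i := fun i => hN.1 _ _
  have hmaj : ∀ k, prefSum x k ≤ prefSum (glbVec p q) k := fun k => by
    have h := hN.sum_le_prefSum_glbVec hp hq
      ((univ.filter fun i : Fin (n * n) => (i : ℕ) < k).map e.toEmbedding) (k := k)
      (by rw [card_map, Fin.card_filter_val_lt]; exact min_le_right _ _)
    rw [sum_map, sum_filter] at h
    exact h
  have hxsum : ∀ g : ℝ → ℝ, ∑ i, g (x i) = ∑ i, ∑ j, g (N i j) := fun g => by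
    rw [← Fintype.sum_prod_type', ← e.sum_comp]
  have htot : prefSum x (n * n) = prefSum (glbVec p q) (n * n) := by
    rw [prefSum_of_le x le_rfl, prefSum_of_le _ (Nat.le_mul_self n), sum_glbVec hp hq,
      hxsum (fun t => t), sum_congr rfl fun i _ => hN.2.1 i, hp.2.2]
  have hK := karamata hfc hc (m := n * n) (zeroPad_nonneg hxnn)
    (zeroPad_nonneg (glbVec_nonneg hp.2.1 hq.2.1))
    (fun i hi => by
      have h := he (show (⟨i, by omega⟩ : Fin (n * n)) ≤ ⟨i + 1, hi⟩ from
        Fin.le_def.mpr (Nat.le_succ i))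
      simpa [zeroPad, hi, show i < n * n by omega, hx] using h)
    (fun k => by rw [sum_range_zeroPad, sum_range_zeroPad]; exact hmaj k)
    (by rw [sum_range_zeroPad, sum_range_zeroPad]; exact htot)
  refine le_trans (le_of_eq ?_) hK
  rw [← hxsum, ← Fin.sum_univ_eq_sum_range (fun i => f (zeroPad x i))]
  simp [zeroPad]

lemma sum_zeroPad_eq {f : ℝ → ℝ} (hf0 : f 0 = 0) {n m : ℕ} (hm : n ≤ m) (z : Fin n → ℝ) :
    ∑ i ∈ range m, f (zeroPad z i) = ∑ i, f (z i) := by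
  rw [← sum_subset (range_subset_range.mpr hm) fun i _ hi => by
    rw [mem_range] at hi; simp [zeroPad, hi, hf0], ← Fin.sum_univ_eq_sum_range
    (fun i => f (zeroPad z i))]
  simp [zeroPad]

/-! ### Power functions -/

lemma rpow_tangent_le {α : ℝ} (hα : 1 < α) {x y : ℝ} (hx : 0 < x) (hy : 0 < y) :
    x ^ α + α * x ^ (α - 1) * (y - x) ≤ y ^ α := by
  have h := one_add_mul_self_le_rpow_one_add (s := y / x - 1) (p := α)
    (by have := div_pos hy hx; linarith) hα.le
  rw [add_sub_cancel, Real.div_rpow hy.le hx.le, le_div_iff₀ (Real.rpow_pos_of_pos hx α)] at h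
  refine le_trans (le_of_eq ?_) h
  rw [Real.rpow_sub_one hx.ne']
  field_simp

lemma le_rpow_tangent {α : ℝ} (h0 : 0 < α) (hα : α < 1) {x y : ℝ} (hx : 0 < x) (hy : 0 < y) :
    y ^ α ≤ x ^ α + α * x ^ (α - 1) * (y - x) := by
  have h := rpow_one_add_le_one_add_mul_self (s := y / x - 1) (p := α)
    (by have := div_pos hy hx; linarith) h0.le hα.le
  rw [add_sub_cancel, Real.div_rpow hy.le hx.le, div_le_iff₀ (Real.rpow_pos_of_pos hx α)] at h
  refine le_trans h (le_of_eq ?_)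
  rw [Real.rpow_sub_one hx.ne']
  field_simp

lemma continuous_shift_rpow {α : ℝ} (h0 : 0 < α) (t : ℝ) : Continuous fun ε : ℝ => (t + ε) ^ α :=
  (continuous_const.add continuous_id).rpow_const fun _ => Or.inr h0.le

/-- The power sum comparison for `α > 1`, through `(x + ε) ^ α` and `ε → 0`. -/
lemma IsCoupling.sum_rpow_le {α : ℝ} (hα : 1 < α) {n : ℕ} {N : Fin n → Fin n → ℝ}
    {p q : Fin n → ℝ} (hp : IsProbVec p) (hq : IsProbVec q) (hN : IsCoupling N p q) :
    ∑ i, ∑ j, N i j ^ α ≤ ∑ i, glbVec p q i ^ α := by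
  have h0 : 0 < α := by linarith
  rw [← sum_zeroPad_eq (f := fun t => t ^ α) (Real.zero_rpow h0.ne') (Nat.le_mul_self n)]
  have hε : ∀ ε : ℝ, 0 < ε → ∑ i, ∑ j, (N i j + ε) ^ α ≤
      ∑ i ∈ range (n * n), (zeroPad (glbVec p q) i + ε) ^ α := fun ε hε =>
    hN.sum_le_sum_zeroPad (f := fun t => (t + ε) ^ α) (c := fun t => α * (t + ε) ^ (α - 1))
      (fun x y hx hy => by
        have := rpow_tangent_le hα (show 0 < x + ε by linarith) (show 0 < y + ε by linarith)
        rwa [add_sub_add_right_eq_sub] at this)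
      (fun x y hx hxy => mul_le_mul_of_nonneg_left
        (Real.rpow_le_rpow (by linarith) (by linarith) (by linarith)) h0.le) hp hq
  have hl : Continuous fun ε : ℝ => ∑ i, ∑ j, (N i j + ε) ^ α :=
    continuous_finsetSum _ fun i _ => continuous_finsetSum _ fun j _ => continuous_shift_rpow h0 _
  have hr : Continuous fun ε : ℝ => ∑ i ∈ range (n * n), (zeroPad (glbVec p q) i + ε) ^ α :=
    continuous_finsetSum _ fun i _ => continuous_shift_rpow h0 _
  have := le_of_tendsto_of_tendsto (hl.continuousWithinAt (s := Set.Ioi 0) (x := 0))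
    (hr.continuousWithinAt (s := Set.Ioi 0) (x := 0))
    (Filter.eventually_of_mem self_mem_nhdsWithin fun ε h => hε ε h)
  simpa using this

/-- The power sum comparison for `0 < α < 1`, through `(x + ε) ^ α` and `ε → 0`. -/
lemma IsCoupling.le_sum_rpow {α : ℝ} (h0 : 0 < α) (hα : α < 1) {n : ℕ} {N : Fin n → Fin n → ℝ}
    {p q : Fin n → ℝ} (hp : IsProbVec p) (hq : IsProbVec q) (hN : IsCoupling N p q) :
    ∑ i, glbVec p q i ^ α ≤ ∑ i, ∑ j, N i j ^ α := by
  rw [← sum_zeroPad_eq (f := fun t => t ^ α) (Real.zero_rpow h0.ne') (Nat.le_mul_self n)]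
  have hε : ∀ ε : ℝ, 0 < ε → ∑ i ∈ range (n * n), (zeroPad (glbVec p q) i + ε) ^ α ≤
      ∑ i, ∑ j, (N i j + ε) ^ α := fun ε hε => by
    have h := hN.sum_le_sum_zeroPad (f := fun t => -(t + ε) ^ α)
      (c := fun t => -(α * (t + ε) ^ (α - 1)))
      (fun x y hx hy => by
        have := le_rpow_tangent h0 hα (show 0 < x + ε by linarith) (show 0 < y + ε by linarith)
        rw [add_sub_add_right_eq_sub] at this
        linarith)
      (fun x y hx hxy => neg_le_neg (mul_le_mul_of_nonneg_left
        (Real.rpow_le_rpow_of_nonpos (by linarith) (by linarith) (by linarith)) h0.le)) hp hq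
    simp only [sum_neg_distrib] at h
    linarith
  have hl : Continuous fun ε : ℝ => ∑ i, ∑ j, (N i j + ε) ^ α :=
    continuous_finsetSum _ fun i _ => continuous_finsetSum _ fun j _ => continuous_shift_rpow h0 _
  have hr : Continuous fun ε : ℝ => ∑ i ∈ range (n * n), (zeroPad (glbVec p q) i + ε) ^ α :=
    continuous_finsetSum _ fun i _ => continuous_shift_rpow h0 _
  have := le_of_tendsto_of_tendsto (hr.continuousWithinAt (s := Set.Ioi 0) (x := 0))
    (hl.continuousWithinAt (s := Set.Ioi 0) (x := 0))
    (Filter.eventually_of_mem self_mem_nhdsWithin fun ε h => hε ε h)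
  simpa using this

lemma two_rpow_mul_half {α x : ℝ} (hx : 0 ≤ x) :
    2 ^ (1 - α) * x ^ α = (2 : ℝ) * (x / 2) ^ α := by
  rw [Real.div_rpow hx (by norm_num), Real.rpow_sub (by norm_num), Real.rpow_one]
  ring

lemma rpow_add_le_two_rpow {α : ℝ} (h0 : 0 < α) (hα : α < 1) {x y : ℝ} (hx : 0 ≤ x) (hy : 0 ≤ y) :
    x ^ α + y ^ α ≤ 2 ^ (1 - α) * (x + y) ^ α := by
  rw [two_rpow_mul_half (add_nonneg hx hy)]
  have h := (Real.concaveOn_rpow h0.le hα.le).2 hx hy (show (0 : ℝ) ≤ 1 / 2 by norm_num)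
    (show (0 : ℝ) ≤ 1 / 2 by norm_num) (by norm_num)
  simp only [smul_eq_mul] at h
  rw [show 1 / 2 * x + 1 / 2 * y = (x + y) / 2 by ring] at h
  linarith

lemma two_rpow_le_rpow_add {α : ℝ} (hα : 1 < α) {x y : ℝ} (hx : 0 ≤ x) (hy : 0 ≤ y) :
    2 ^ (1 - α) * (x + y) ^ α ≤ x ^ α + y ^ α := by
  rw [two_rpow_mul_half (add_nonneg hx hy)]
  have h := (convexOn_rpow hα.le).2 hx hy (show (0 : ℝ) ≤ 1 / 2 by norm_num)
    (show (0 : ℝ) ≤ 1 / 2 by norm_num) (by norm_num)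
  simp only [smul_eq_mul] at h
  rw [show 1 / 2 * x + 1 / 2 * y = (x + y) / 2 by ring] at h
  linarith

lemma sum_rpow_pos {ι : Type*} [Fintype ι] {x : ι → ℝ} (hx : ∀ i, 0 ≤ x i) (h1 : ∑ i, x i = 1)
    (α : ℝ) : 0 < ∑ i, x i ^ α := by
  obtain ⟨i, -, hi⟩ := exists_ne_zero_of_sum_ne_zero (h1.trans_ne one_ne_zero)
  exact sum_pos' (fun i _ => Real.rpow_nonneg (hx i) α)
    ⟨i, mem_univ i, Real.rpow_pos_of_pos (lt_of_le_of_ne (hx i) hi.symm) α⟩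

lemma IsCoupling.sum_rpow_pos {n : ℕ} {N : Fin n → Fin n → ℝ} {p q : Fin n → ℝ}
    (hp : IsProbVec p) (hN : IsCoupling N p q) (α : ℝ) : 0 < ∑ i, ∑ j, N i j ^ α := by
  rw [← Fintype.sum_prod_type']
  refine _root_.sum_rpow_pos (x := fun s : Fin n × Fin n => N s.1 s.2) (fun s => hN.1 _ _) ?_ α
  rw [Fintype.sum_prod_type, sum_congr rfl fun i _ => hN.2.1 i, hp.2.2]

/-- Scaling the power sum by `2 ^ (1 - α)` raises the Rényi entropy by one bit. -/
lemma renyi_scale {α : ℝ} (hα : α ≠ 1) {S : ℝ} (hS : 0 < S) :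
    1 / (1 - α) * Real.logb 2 (2 ^ (1 - α) * S) = 1 / (1 - α) * Real.logb 2 S + 1 := by
  rw [Real.logb_mul (Real.rpow_pos_of_pos two_pos _).ne' hS.ne',
    Real.logb_rpow two_pos (by norm_num)]
  have : 1 - α ≠ 0 := sub_ne_zero.mpr hα.symm
  field_simp
  ring

/-- for any `p, q ∈ P_n` and any `α ∈ (0,1) ∪ (1,∞)`, there is a coupling
`M ∈ C(p,q)` with `H_α(M) ≤ H_α(p ∧ q) + 1 ≤ min_{N ∈ C(p,q)} H_α(N) + 1`. -/
theorem exists_coupling_renyi_le {n : ℕ} (p q : Fin n → ℝ)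
    (hp : IsProbVec p) (hq : IsProbVec q)
    (α : ℝ) (hα : (0 < α ∧ α < 1) ∨ 1 < α) :
    ∃ M : Fin n → Fin n → ℝ, IsCoupling M p q ∧
      RenyiMat α M ≤ Renyi α (glbVec p q) + 1 ∧
      ∀ N : Fin n → Fin n → ℝ, IsCoupling N p q →
        Renyi α (glbVec p q) + 1 ≤ RenyiMat α N + 1 := by
  have hz := sum_rpow_pos (glbVec_nonneg hp.2.1 hq.2.1) (sum_glbVec hp hq) α
  have hC : (0 : ℝ) < 2 ^ (1 - α) := Real.rpow_pos_of_pos two_pos _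
  rcases hα with ⟨h0, h1⟩ | h1
  · have hα0 : 0 ≤ 1 / (1 - α) := one_div_nonneg.mpr (by linarith)
    obtain ⟨M, hM, hMz⟩ := exists_coupling_sum_le (f := fun t => t ^ α) (C := 2 ^ (1 - α))
      (Real.zero_rpow h0.ne') (fun x y hx hy => rpow_add_le_two_rpow h0 h1 hx hy) hp hq
    refine ⟨M, hM, ?_, fun N hN => ?_⟩
    · unfold RenyiMat Renyi
      rw [← renyi_scale h1.ne hz]
      exact mul_le_mul_of_nonneg_left
        (Real.logb_le_logb_of_le one_lt_two (hM.sum_rpow_pos hp α) hMz) hα0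
    · unfold RenyiMat Renyi
      refine add_le_add_left (mul_le_mul_of_nonneg_left ?_ hα0) 1
      exact Real.logb_le_logb_of_le one_lt_two hz (hN.le_sum_rpow h0 h1 hp hq)
  · have hα0 : 1 / (1 - α) ≤ 0 := one_div_nonpos.mpr (by linarith)
    obtain ⟨M, hM, hMz⟩ := exists_coupling_sum_le (f := fun t => -t ^ α) (C := 2 ^ (1 - α))
      (by simp [Real.zero_rpow (show α ≠ 0 by linarith)])
      (fun x y hx hy => by linarith [two_rpow_le_rpow_add h1 hx hy]) hp hq
    simp only [sum_neg_distrib, mul_neg, neg_le_neg_iff] at hMz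
    refine ⟨M, hM, ?_, fun N hN => ?_⟩
    · unfold RenyiMat Renyi
      rw [← renyi_scale h1.ne' hz]
      exact mul_le_mul_of_nonpos_left
        (Real.logb_le_logb_of_le one_lt_two (mul_pos hC hz) hMz) hα0
    · unfold RenyiMat Renyi
      refine add_le_add_left (mul_le_mul_of_nonpos_left ?_ hα0) 1
      exact Real.logb_le_logb_of_le one_lt_two (hN.sum_rpow_pos hp α)
        (hN.sum_rpow_le h1 hp hq)
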